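/- arXiv:2404.02635 — 2 statements merged into one kernel-verified Lean document; each statement's English description precedes it below -/
import Mathlib

section
/- Under the algorithmic setting below, the sequence {x^k} generated by the regularized proximal Newton method without line search satisfies liminf_{k→∞} ‖r(x^k)‖ = 0. -/
open scoped RealInnerProductSpace
open Filter Metric

noncomputable section

/-- The convex subdifferential of `g` at `y`. -/
def subdiff {n : ℕ} (g : EuclideanSpace ℝ (Fin n) → ℝ) (y : EuclideanSpace ℝ (Fin n)) :
    Set (EuclideanSpace ℝ (Fin n)) :=
  {v | ∀ z, g y + ⟪v, z - y⟫ ≤ g z}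

/-- The proximity operator `prox_g(z)`, the (unique, for convex `g`) minimizer of
`y ↦ g y + (1/2)‖y − z‖²`. -/
noncomputable def proxPt {n : ℕ} (g : EuclideanSpace ℝ (Fin n) → ℝ)
    (z : EuclideanSpace ℝ (Fin n)) : EuclideanSpace ℝ (Fin n) :=
  Classical.epsilon fun p => ∀ y, g p + (1 / 2) * ‖p - z‖ ^ 2 ≤ g y + (1 / 2) * ‖y - z‖ ^ 2

/-- The residual (prox-gradient) mapping `r(x) = x − prox_φ(x − ∇f(x))`. -/
noncomputable def resid {n : ℕ} (f φ : EuclideanSpace ℝ (Fin n) → ℝ)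
    (x : EuclideanSpace ℝ (Fin n)) : EuclideanSpace ℝ (Fin n) :=
  x - proxPt φ (x - gradient f x)

/-- The smallest eigenvalue of a symmetric operator on ℝᵐ, as the infimum of its quadratic
form over the unit sphere. -/
noncomputable def lambdaMin {m : ℕ} (T : EuclideanSpace ℝ (Fin m) →L[ℝ] EuclideanSpace ℝ (Fin m)) :
    ℝ :=
  ⨅ u : {u : EuclideanSpace ℝ (Fin m) // ‖u‖ = 1}, ⟪T u.1, u.1⟫

/-- Global linear lower bound for convex functions, locally uniform in the base point. -/
theorem aux_convex_lip {n : ℕ} (φ : EuclideanSpace ℝ (Fin n) → ℝ) (hφ : ConvexOn ℝ Set.univ φ)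
    (x₀ : EuclideanSpace ℝ (Fin n)) :
    ∃ L : ℝ, 0 ≤ L ∧ ∃ e > 0, ∀ x, dist x x₀ < e → ∀ y, φ x - φ y ≤ L * ‖y - x‖ := by
  have hl := hφ.locallyLipschitzOn isOpen_univ
  obtain ⟨K, t, ht, hK⟩ := hl (Set.mem_univ x₀)
  rw [nhdsWithin_univ] at ht
  obtain ⟨e, he, hsub⟩ := Metric.mem_nhds_iff.1 ht
  refine ⟨K, K.2, e, he, fun x hx y => ?_⟩
  have hc : Continuous fun s : ℝ => x + s • (y - x) := by fun_prop
  have h1 : ∀ᶠ s : ℝ in nhds 0, x + s • (y - x) ∈ Metric.ball x₀ e := by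
    apply hc.continuousAt.eventually_mem
    apply Metric.isOpen_ball.mem_nhds
    simpa using hx
  obtain ⟨e', he', h2⟩ := Metric.eventually_nhds_iff.1 h1
  set s := min (e' / 2) 1 with hs
  have hs0 : 0 < s := by positivity
  have hs1 : s ≤ 1 := min_le_right _ _
  have hs2 : s < e' := lt_of_le_of_lt (min_le_left _ _) (by linarith)
  have h3 := h2 (y := s) (by simpa [abs_of_pos hs0] using hs2)
  have h4 := hK.dist_le_mul _ (hsub (Metric.mem_ball.2 hx)) _ (hsub h3)
  have h5 := hφ.2 (Set.mem_univ x) (Set.mem_univ y) 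
      (show (0 : ℝ) ≤ 1 - s by linarith) hs0.le (by ring)
  have h6 : (1 - s) • x + s • y = x + s • (y - x) := by module
  rw [h6] at h5
  rw [Real.dist_eq, dist_eq_norm] at h4
  have h7 : ‖x - (x + s • (y - x))‖ = s * ‖y - x‖ := by
    rw [show x - (x + s • (y - x)) = -(s • (y - x)) by abel, norm_neg, norm_smul, Real.norm_of_nonneg hs0.le]
  rw [h7] at h4
  have h8 := (le_abs_self _).trans h4
  simp only [smul_eq_mul] at h5
  have h9 : s * (φ x - φ y) ≤ s * (K * ‖y - x‖) := by linarith
  exact le_of_mul_le_mul_left h9 hs0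

theorem aux_prox_spec {n : ℕ} (φ : EuclideanSpace ℝ (Fin n) → ℝ) (hφ : ConvexOn ℝ Set.univ φ)
    (z : EuclideanSpace ℝ (Fin n)) (y : EuclideanSpace ℝ (Fin n)) :
    φ (proxPt φ z) + (1 / 2) * ‖proxPt φ z - z‖ ^ 2 ≤ φ y + (1 / 2) * ‖y - z‖ ^ 2 := by
  have hex : ∃ p, ∀ y, φ p + (1 / 2) * ‖p - z‖ ^ 2 ≤ φ y + (1 / 2) * ‖y - z‖ ^ 2 := by
    have hcont : Continuous φ := continuousOn_univ.1 (hφ.continuousOn isOpen_univ)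
    refine Continuous.exists_forall_le' (f := fun p => φ p + (1 / 2) * ‖p - z‖ ^ 2)
      (by fun_prop) z ?_
    obtain ⟨L, hL, e, he, h⟩ := aux_convex_lip φ hφ z
    have h1 : ∀ᶠ y in cocompact (EuclideanSpace ℝ (Fin n)), 2 * L ≤ dist y z :=
      (tendsto_dist_right_cocompact_atTop z).eventually_ge_atTop _
    filter_upwards [h1] with y hy
    have h2 := h z (by simpa using he) y
    rw [dist_eq_norm] at hy
    simp only [sub_self, norm_zero]
    nlinarith [norm_nonneg (y - z)]
  exact Classical.epsilon_spec hex y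

theorem aux_prox_var {n : ℕ} (φ : EuclideanSpace ℝ (Fin n) → ℝ) (hφ : ConvexOn ℝ Set.univ φ)
    (z : EuclideanSpace ℝ (Fin n)) (y : EuclideanSpace ℝ (Fin n)) :
    φ (proxPt φ z) + ⟪z - proxPt φ z, y - proxPt φ z⟫ ≤ φ y := by
  set p := proxPt φ z with hp
  by_contra hcon
  push Not at hcon
  set D := φ p + ⟪z - p, y - p⟫ - φ y with hD
  have hD0 : 0 < D := by linarith
  set N := ‖y - p‖ ^ 2 with hN
  have hN0 : 0 ≤ N := by positivity
  have key : ∀ s : ℝ, 0 < s → s ≤ 1 → D ≤ s / 2 * N := by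
    intro s hs0 hs1
    have h1 := aux_prox_spec φ hφ z (p + s • (y - p))
    rw [← hp] at h1
    have h5 := hφ.2 (Set.mem_univ p) (Set.mem_univ y) 
      (show (0 : ℝ) ≤ 1 - s by linarith) hs0.le (by ring)
    have h6 : (1 - s) • p + s • y = p + s • (y - p) := by module
    rw [h6] at h5
    simp only [smul_eq_mul] at h5
    have h7 : ‖p + s • (y - p) - z‖ ^ 2 = ‖p - z‖ ^ 2 - 2 * s * ⟪z - p, y - p⟫ + s ^ 2 * N := by
      rw [show p + s • (y - p) - z = s • (y - p) - (z - p) by abel, norm_sub_sq_real,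
        inner_smul_left, norm_smul, mul_pow, real_inner_comm, norm_sub_rev z p]
      simp
      ring
    rw [h7] at h1
    have : s * D ≤ s * (s / 2 * N) := by rw [hD]; nlinarith
    exact le_of_mul_le_mul_left this hs0
  have h1 := key (min 1 (D / (N + 1))) (by positivity) (min_le_left _ _)
  have h2 : min 1 (D / (N + 1)) ≤ D / (N + 1) := min_le_right _ _
  have h3 : D / (N + 1) * N ≤ D := by
    rw [div_mul_eq_mul_div, div_le_iff₀ (by linarith)]; nlinarith
  nlinarith

theorem aux_prox_nonexp {n : ℕ} (φ : EuclideanSpace ℝ (Fin n) → ℝ) (hφ : ConvexOn ℝ Set.univ φ)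
    (z w : EuclideanSpace ℝ (Fin n)) : ‖proxPt φ z - proxPt φ w‖ ≤ ‖z - w‖ := by
  have h1 := aux_prox_var φ hφ z (proxPt φ w)
  have h2 := aux_prox_var φ hφ w (proxPt φ z)
  set p := proxPt φ z
  set q := proxPt φ w
  have h3 : ⟪z - p, q - p⟫ + ⟪w - q, p - q⟫ ≤ 0 := by linarith
  have h4 : ⟪z - p, q - p⟫ + ⟪w - q, p - q⟫ = ‖p - q‖ ^ 2 - ⟪z - w, p - q⟫ := by
    rw [← real_inner_self_eq_norm_sq]
    simp only [inner_sub_left, inner_sub_right]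
    ring
  have h5 := real_inner_le_norm (z - w) (p - q)
  by_contra hcon
  push Not at hcon
  nlinarith [norm_nonneg (z - w), norm_nonneg (p - q)]

theorem aux_lambdaMin_le {m : ℕ} (T : EuclideanSpace ℝ (Fin m) →L[ℝ] EuclideanSpace ℝ (Fin m))
    (u : EuclideanSpace ℝ (Fin m)) : lambdaMin T * ‖u‖ ^ 2 ≤ ⟪T u, u⟫ := by
  by_cases hu : u = 0
  · simp [hu]
  have hu' : 0 < ‖u‖ := norm_pos_iff.2 hu
  have hb : BddBelow (Set.range fun v : {u : EuclideanSpace ℝ (Fin m) // ‖u‖ = 1} => ⟪T v.1, v.1⟫) := by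
    refine ⟨-‖T‖, ?_⟩
    rintro _ ⟨v, rfl⟩
    have h1 := abs_real_inner_le_norm (T v.1) v.1
    have h2 := T.le_opNorm v.1
    rw [v.2] at h1 h2
    have h3 := (abs_le.1 h1).1
    simp only
    linarith
  have h := ciInf_le hb ⟨‖u‖⁻¹ • u, by rw [norm_smul]; simp [hu'.ne']⟩
  simp only [map_smul, inner_smul_left, inner_smul_right] at h
  simp only [RCLike.conj_to_real] at h
  have h' : lambdaMin T ≤ ‖u‖⁻¹ * (‖u‖⁻¹ * ⟪T u, u⟫) := h
  calc lambdaMin T * ‖u‖ ^ 2 ≤ ‖u‖⁻¹ * (‖u‖⁻¹ * ⟪T u, u⟫) * ‖u‖ ^ 2 := by gcongr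
    _ = _ := by field_simp

theorem aux_lambdaMin_ge {m : ℕ} (T : EuclideanSpace ℝ (Fin m) →L[ℝ] EuclideanSpace ℝ (Fin m)) :
    -‖T‖ ≤ lambdaMin T := by
  by_cases h : Nonempty {u : EuclideanSpace ℝ (Fin m) // ‖u‖ = 1}
  · refine le_ciInf fun v => ?_
    have h1 := abs_real_inner_le_norm (T v.1) v.1
    have h2 := T.le_opNorm v.1
    rw [v.2] at h1 h2
    have h3 := (abs_le.1 h1).1
    linarith
  · rw [not_nonempty_iff] at h
    rw [lambdaMin, Real.iInf_of_isEmpty]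
    simp

theorem aux_grad_contDiff {m : ℕ} (ψ : EuclideanSpace ℝ (Fin m) → ℝ) (hψ : ContDiff ℝ 2 ψ) :
    ContDiff ℝ 1 (gradient ψ) := by
  have h : ContDiff ℝ 1 (fderiv ℝ ψ) := hψ.fderiv_right (by norm_num)
  exact (InnerProductSpace.toDual ℝ (EuclideanSpace ℝ (Fin m))).symm.contDiff.comp h

theorem aux_grad_comp {n m : ℕ} (ψ : EuclideanSpace ℝ (Fin m) → ℝ)
    (A : EuclideanSpace ℝ (Fin n) →L[ℝ] EuclideanSpace ℝ (Fin m))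
    (b : EuclideanSpace ℝ (Fin m)) (hψ : ContDiff ℝ 2 ψ) (f : EuclideanSpace ℝ (Fin n) → ℝ)
    (hf : ∀ y, f y = ψ (A y - b)) (y : EuclideanSpace ℝ (Fin n)) :
    gradient f y = ContinuousLinearMap.adjoint A (gradient ψ (A y - b)) := by
  have hfe : f = fun y => ψ (A y - b) := funext hf
  have h1 : HasFDerivAt f ((fderiv ℝ ψ (A y - b)).comp A) y := by
    rw [hfe]
    exact ((hψ.differentiable (by norm_num)) (A y - b)).hasFDerivAt.comp y
      (A.hasFDerivAt.sub_const b)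
  apply ext_inner_right ℝ
  intro v
  rw [ContinuousLinearMap.adjoint_inner_left, inner_gradient_left, inner_gradient_left, h1.fderiv]
  rfl

theorem aux_hess_comp {n m : ℕ} (ψ : EuclideanSpace ℝ (Fin m) → ℝ)
    (A : EuclideanSpace ℝ (Fin n) →L[ℝ] EuclideanSpace ℝ (Fin m))
    (b : EuclideanSpace ℝ (Fin m)) (hψ : ContDiff ℝ 2 ψ) (f : EuclideanSpace ℝ (Fin n) → ℝ)
    (hf : ∀ y, f y = ψ (A y - b)) (y v : EuclideanSpace ℝ (Fin n)) :
    ⟪v, fderiv ℝ (gradient f) y v⟫ = ⟪fderiv ℝ (gradient ψ) (A y - b) (A v), A v⟫ := by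
  have hfe : gradient f = fun y => ContinuousLinearMap.adjoint A (gradient ψ (A y - b)) :=
    funext (aux_grad_comp ψ A b hψ f hf)
  have h0 : HasFDerivAt (fun y => gradient ψ (A y - b))
      ((fderiv ℝ (gradient ψ) (A y - b)).comp A) y :=
    HasFDerivAt.comp (g := gradient ψ) y
      (((aux_grad_contDiff ψ hψ).differentiable (by norm_num)) (A y - b)).hasFDerivAt
      (A.hasFDerivAt.sub_const b)
  have h1 : HasFDerivAt (gradient f) ((ContinuousLinearMap.adjoint A).comp
      ((fderiv ℝ (gradient ψ) (A y - b)).comp A)) y := by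
    rw [hfe]
    exact (ContinuousLinearMap.adjoint A).hasFDerivAt.comp y h0
  rw [h1.fderiv]
  simp only [ContinuousLinearMap.comp_apply]
  rw [ContinuousLinearMap.adjoint_inner_right, real_inner_comm]

theorem aux_taylor {n : ℕ} (f : EuclideanSpace ℝ (Fin n) → ℝ) (hf : ContDiff ℝ 2 f)
    (x₀ : EuclideanSpace ℝ (Fin n)) :
    ∃ K : ℝ, 0 ≤ K ∧ ∃ e > 0, ∀ x y, dist x x₀ < e → dist y x₀ < e →
      f y - f x - ⟪gradient f x, y - x⟫ ≤ K * ‖y - x‖ ^ 2 := by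
  have h : ContDiff ℝ 1 (fderiv ℝ f) := hf.fderiv_right (by norm_num)
  obtain ⟨K, t, ht, hK⟩ := h.contDiffAt.exists_lipschitzOnWith (x := x₀)
  obtain ⟨e, he, hsub⟩ := Metric.mem_nhds_iff.1 ht
  refine ⟨K, K.2, e, he, fun x y hx hy => ?_⟩
  have hseg : segment ℝ x y ⊆ Metric.ball x₀ e :=
    (convex_ball x₀ e).segment_subset hx hy
  have h1 := (convex_segment x y).norm_image_sub_le_of_norm_fderiv_le' (𝕜 := ℝ) (f := f)
    (φ := fderiv ℝ f x) (C := K * ‖y - x‖) (fun z _ => (hf.differentiable (by norm_num)) z)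
    (fun z hz => by
      have h2 := hK.dist_le_mul z (hsub (hseg hz)) x (hsub hx)
      rw [dist_eq_norm, dist_eq_norm] at h2
      refine h2.trans ?_
      gcongr
      obtain ⟨s, hs, rfl⟩ := (segment_eq_image' ℝ x y) ▸ hz
      simp only [add_sub_cancel_left, norm_smul, Real.norm_of_nonneg hs.1]
      nlinarith [hs.2, norm_nonneg (y - x)])
    (left_mem_segment ℝ x y) (right_mem_segment ℝ x y)
  rw [inner_gradient_left]
  have h3 := (le_abs_self _).trans h1
  linarith

theorem aux_eps (r : ℕ → ℝ) (hr : ∀ k, 0 < r k) (ε : ℝ) (hε : 0 < ε)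
    (h : ∀ᶠ k in atTop, ε ≤ r k) : ∃ ε' > 0, ∀ k, ε' ≤ r k := by
  obtain ⟨N, hN⟩ := eventually_atTop.1 h
  clear h
  induction N generalizing ε with
  | zero => exact ⟨ε, hε, fun k => hN k (Nat.zero_le _)⟩
  | succ N ih =>
    refine ih (min ε (r N)) (lt_min hε (hr N)) fun k hk => ?_
    rcases Nat.eq_or_lt_of_le hk with rfl | h
    · exact min_le_right _ _
    · exact (min_le_left _ _).trans (hN k h)

set_option maxHeartbeats 4000000

/-- Theorem 4.5 (global convergence): the sequence `{xᵏ}` generated by the regularized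
proximal Newton method without line search satisfies `liminf_{k→∞} ‖r(xᵏ)‖ = 0`. -/
theorem stmt_8 {n m : ℕ}
    -- problem data: f(x) = ψ(Ax − b), F = f + φ bounded below, φ convex, ψ C²
    (ψ : EuclideanSpace ℝ (Fin m) → ℝ)
    (A : EuclideanSpace ℝ (Fin n) →L[ℝ] EuclideanSpace ℝ (Fin m))
    (b : EuclideanSpace ℝ (Fin m))
    (φ : EuclideanSpace ℝ (Fin n) → ℝ)
    (hψ : ContDiff ℝ 2 ψ) (hφ : ConvexOn ℝ Set.univ φ)
    (f F : EuclideanSpace ℝ (Fin n) → ℝ)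
    (hf : ∀ y, f y = ψ (A y - b)) (hF : ∀ y, F y = f y + φ y)
    (hFbdd : BddBelow (Set.range F))
    -- algorithm parameters
    (c₁ c₂ σ₁ σ₂ η θ α a νmin ν₀ νbar δ τ pmin κ : ℝ)
    (hc₁ : 0 < c₁) (hc₁' : c₁ < 1) (hc₂ : c₁ < c₂) (hc₂' : c₂ < 1)
    (hσ₁ : 0 < σ₁) (hσ₁' : σ₁ < 1) (hσ₂ : 1 < σ₂)
    (hη : 0 < η) (hη' : η < 1) (hθ : 0 < θ) (hθ' : θ < 1)
    (hα : 0 < α) (hα' : α < 1) (ha : 1 ≤ a)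
    (hνmin : 0 < νmin) (hν₀a : νmin ≤ ν₀) (hν₀b : ν₀ ≤ νbar)
    (hδ0 : 0 < δ) (hδ1 : δ ≤ 1) (hτ : δ ≤ τ)
    (hpmin : 0 < pmin) (hpmin' : pmin < 1 / 2) (hκ : 1 + δ < κ)
    -- iterates and regularization sequences
    (x xhat : ℕ → EuclideanSpace ℝ (Fin n)) (ν rbar μ : ℕ → ℝ)
    (hν0 : ν 0 = ν₀) (hrbar0 : rbar 0 = ‖resid f φ (x 0)‖)
    (hμ : ∀ k, μ k = ν k * rbar k ^ δ)
    -- Λ_k, H_k + μ_k I =: G_k, the models q_k, q̂_k, and the subproblem residual R_k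
    (Λ : ℕ → ℝ)
    (hΛ : ∀ k, Λ k = a * max (-(lambdaMin (fderiv ℝ (gradient ψ) (A (x k) - b)))) 0)
    (G : ℕ → EuclideanSpace ℝ (Fin n) →L[ℝ] EuclideanSpace ℝ (Fin n))
    (hG : ∀ k, G k = fderiv ℝ (gradient f) (x k)
        + Λ k • ((ContinuousLinearMap.adjoint A).comp A)
        + μ k • ContinuousLinearMap.id ℝ (EuclideanSpace ℝ (Fin n)))
    (q qhat : ℕ → EuclideanSpace ℝ (Fin n) → ℝ)
    (hq : ∀ k y, q k y = f (x k) + ⟪gradient f (x k), y - x k⟫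
        + (1 / 2) * ⟪y - x k, (fderiv ℝ (gradient f) (x k)) (y - x k)⟫ + φ y)
    (hqhat : ∀ k y, qhat k y = f (x k) + ⟪gradient f (x k), y - x k⟫
        + (1 / 2) * ⟪y - x k, (G k) (y - x k)⟫ + φ y)
    (R : ℕ → EuclideanSpace ℝ (Fin n) → EuclideanSpace ℝ (Fin n))
    (hR : ∀ k y, R k y = y - proxPt φ (y - gradient f (x k) - (G k) (y - x k)))
    -- the inexactness criteria satisfied by x̂ᵏ
    (hinex1 : ∀ k, ‖R k (xhat k)‖ ≤
        θ * min ‖resid f φ (x k)‖ (‖resid f φ (x k)‖ ^ (1 + τ)))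
    (hinex2 : ∀ k, α * μ k / 2 * ‖xhat k - x k‖ ^ 2 ≤ F (x k) - qhat k (xhat k))
    -- dᵏ, pred_k, ared_k, ρ_k
    (d : ℕ → EuclideanSpace ℝ (Fin n)) (hd : ∀ k, d k = xhat k - x k)
    (pred ared ρ : ℕ → ℝ)
    (hpred : ∀ k, pred k = F (x k) - q k (xhat k))
    (hared : ∀ k, ared k = F (x k) - F (xhat k))
    (hρ : ∀ k, ρ k = ared k / pred k)
    -- update rules (unsuccessful / successful / highly successful iterations)
    (unsucc : ℕ → Prop)
    (hunsucc : ∀ k, unsucc k ↔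
        pred k ≤ pmin * (1 - θ) * ‖d k‖ *
          min ‖resid f φ (x k)‖ (‖resid f φ (x k)‖ ^ κ) ∨ ρ k ≤ c₁)
    (hupd : ∀ k,
        (unsucc k → x (k + 1) = x k ∧ ν (k + 1) = σ₂ * ν k) ∧
        (¬unsucc k → x (k + 1) = xhat k ∧
          (ρ k ≤ c₂ → ν (k + 1) = min (ν k) νbar) ∧
          (c₂ < ρ k → ν (k + 1) = min (max (σ₁ * ν k) νmin) νbar)))
    (hrbarupd : ∀ k,
        (‖resid f φ (x (k + 1))‖ ≤ η * rbar k → rbar (k + 1) = ‖resid f φ (x (k + 1))‖) ∧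
        (¬‖resid f φ (x (k + 1))‖ ≤ η * rbar k → rbar (k + 1) = rbar k))
    -- no iterate is stationary (otherwise the algorithm terminates)
    (hrne : ∀ k, resid f φ (x k) ≠ 0)
    :
    Filter.liminf (fun k => ‖resid f φ (x k)‖) atTop = 0 := by
  have hrpos : ∀ k, 0 < ‖resid f φ (x k)‖ := fun k => norm_pos_iff.2 (hrne k)
  suffices hfreq : ∀ ε : ℝ, 0 < ε → ∃ᶠ k in atTop, ‖resid f φ (x k)‖ ≤ ε by
    have hbdd : IsBoundedUnder (· ≥ ·) atTop (fun k => ‖resid f φ (x k)‖) :=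
      isBoundedUnder_of ⟨0, fun k => norm_nonneg _⟩
    apply le_antisymm
    · refine le_of_forall_pos_le_add fun ε hε => ?_
      rw [zero_add]
      exact liminf_le_of_frequently_le (hfreq ε hε) hbdd
    · refine le_liminf_of_le ?_ (Eventually.of_forall fun k => norm_nonneg _)
      exact IsCoboundedUnder.of_frequently_le (hfreq 1 one_pos)
  intro ε₀ hε₀
  by_contra hnot
  rw [not_frequently] at hnot
  obtain ⟨ε, hε, hrε⟩ := aux_eps _ hrpos ε₀ hε₀ (hnot.mono fun k hk => (not_le.1 hk).le)
  clear hnot hε₀ ε₀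
  -- bounds on rbar, ν, μ
  have hrbar_ge : ∀ k, ε ≤ rbar k := by
    intro k
    induction k with
    | zero => rw [hrbar0]; exact hrε 0
    | succ k ih =>
      by_cases h : ‖resid f φ (x (k + 1))‖ ≤ η * rbar k
      · rw [(hrbarupd k).1 h]; exact hrε _
      · rw [(hrbarupd k).2 h]; exact ih
  have hrbar_le : ∀ k, rbar k ≤ rbar 0 := by
    intro k
    induction k with
    | zero => exact le_rfl
    | succ k ih =>
      have h0 := hrbar_ge k
      by_cases h : ‖resid f φ (x (k + 1))‖ ≤ η * rbar k
      · rw [(hrbarupd k).1 h]; nlinarith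
      · rw [(hrbarupd k).2 h]; exact ih
  have hνbar : 0 < νbar := by linarith
  have hνpos : ∀ k, 0 < ν k := by
    intro k
    induction k with
    | zero => rw [hν0]; linarith
    | succ k ih =>
      by_cases h : unsucc k
      · rw [((hupd k).1 h).2]; positivity
      · by_cases h' : ρ k ≤ c₂
        · rw [((hupd k).2 h).2.1 h']; exact lt_min ih hνbar
        · rw [((hupd k).2 h).2.2 (not_le.1 h')]
          exact lt_min (lt_max_of_lt_right hνmin) hνbar
  have hεδ : 0 < ε ^ δ := Real.rpow_pos_of_pos hε _
  have hμ_ge : ∀ k, ν k * ε ^ δ ≤ μ k := by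
    intro k
    rw [hμ]
    exact mul_le_mul_of_nonneg_left (Real.rpow_le_rpow hε.le (hrbar_ge k) hδ0.le) (hνpos k).le
  have hμ_le : ∀ k, μ k ≤ ν k * rbar 0 ^ δ := by
    intro k
    rw [hμ]
    exact mul_le_mul_of_nonneg_left
      (Real.rpow_le_rpow (hε.le.trans (hrbar_ge k)) (hrbar_le k) hδ0.le) (hνpos k).le
  have hμpos : ∀ k, 0 < μ k := fun k => lt_of_lt_of_le (mul_pos (hνpos k) hεδ) (hμ_ge k)
  -- descent
  have hθ1 : 0 < 1 - θ := by linarith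
  set w : ℝ := min ε (ε ^ κ) with hw
  have hwpos : 0 < w := lt_min hε (Real.rpow_pos_of_pos hε _)
  have hw_le : ∀ k, w ≤ min ‖resid f φ (x k)‖ (‖resid f φ (x k)‖ ^ κ) := fun k =>
    min_le_min (hrε k) (Real.rpow_le_rpow hε.le (hrε k) (by linarith))
  set C0 : ℝ := c₁ * (pmin * (1 - θ) * w) with hC0
  have hC0pos : 0 < C0 := by positivity
  have hdesc : ∀ k, C0 * ‖x (k + 1) - x k‖ ≤ F (x k) - F (x (k + 1)) := by
    intro k
    by_cases h : unsucc k
    · rw [((hupd k).1 h).1]; simp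
    · have hx := ((hupd k).2 h).1
      rw [hunsucc, not_or, not_le, not_le] at h
      obtain ⟨h1, h2⟩ := h
      have h3 : pmin * (1 - θ) * w * ‖d k‖ < pred k := by
        refine lt_of_le_of_lt ?_ h1
        calc pmin * (1 - θ) * w * ‖d k‖ = pmin * (1 - θ) * ‖d k‖ * w := by ring
          _ ≤ _ := by gcongr; exact hw_le k
      have h4 : 0 < pred k := lt_of_le_of_lt (by positivity) h3
      rw [hρ, lt_div_iff₀ h4, hared] at h2
      rw [hx, ← hd]
      have h5 : c₁ * (pmin * (1 - θ) * w * ‖d k‖) ≤ c₁ * pred k := by gcongr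
      rw [hC0]
      linarith
  obtain ⟨Fl, hFl⟩ := hFbdd
  have hsum : Summable fun k => ‖x (k + 1) - x k‖ := by
    refine summable_of_sum_range_le (c := (F (x 0) - Fl) / C0) (fun k => norm_nonneg _) fun N => ?_
    rw [le_div_iff₀ hC0pos]
    have h1 : ∀ N, (∑ i ∈ Finset.range N, ‖x (i + 1) - x i‖) * C0 ≤ F (x 0) - F (x N) := by
      intro N
      induction N with
      | zero => simp
      | succ N ih =>
        rw [Finset.sum_range_succ, add_mul]
        have := hdesc N
        linarith
    have h2 : Fl ≤ F (x N) := hFl ⟨_, rfl⟩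
    linarith [h1 N]
  have hcau : CauchySeq x := by
    refine cauchySeq_of_dist_le_of_summable _ (fun k => ?_) hsum
    rw [dist_eq_norm, norm_sub_rev]
  obtain ⟨xb, hxb⟩ := cauchySeq_tendsto_of_complete hcau
  have hstep0 : Tendsto (fun k => ‖x (k + 1) - x k‖) atTop (nhds 0) := hsum.tendsto_atTop_zero
  -- local constants
  have hfC : ContDiff ℝ 2 f := by
    have : f = fun y => ψ (A y - b) := funext hf
    rw [this]
    exact hψ.comp (A.contDiff.sub contDiff_const)
  obtain ⟨L, hL, e₁, he₁, hφL⟩ := aux_convex_lip φ hφ xb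
  obtain ⟨K, hK, e₂, he₂, hTay⟩ := aux_taylor f hfC xb
  have hgf := aux_grad_contDiff f hfC
  have hgψ := aux_grad_contDiff ψ hψ
  have hbd : ∀ {Y : Type} [NormedAddCommGroup Y] (g : EuclideanSpace ℝ (Fin n) → Y), Continuous g →
      ∃ C : ℝ, 0 ≤ C ∧ ∀ᶠ k in atTop, ‖g (x k)‖ ≤ C := by
    intro Y _ g hg
    have h1 : Tendsto (fun k => ‖g (x k)‖) atTop (nhds ‖g xb‖) :=
      ((hg.norm).tendsto xb).comp hxb
    refine ⟨‖g xb‖ + 1, by positivity, ?_⟩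
    filter_upwards [h1.eventually (gt_mem_nhds (lt_add_one _))] with k hk using hk.le
  obtain ⟨Cg, hCg0, hCg⟩ := hbd (gradient f) hgf.continuous
  obtain ⟨C1, hC10, hC1⟩ := hbd (fderiv ℝ (gradient f)) (hgf.continuous_fderiv (by norm_num))
  obtain ⟨C2, hC20, hC2⟩ := hbd (fun y => fderiv ℝ (gradient ψ) (A y - b))
    ((hgψ.continuous_fderiv (by norm_num)).comp (A.continuous.sub continuous_const))
  set NA : ℝ := ‖(ContinuousLinearMap.adjoint A).comp A‖ with hNA
  have hNA0 : 0 ≤ NA := norm_nonneg _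
  set CH : ℝ := C1 + a * C2 * NA with hCH
  have hCH0 : 0 ≤ CH := by positivity
  -- facts for all k
  have hΛ0 : ∀ k, 0 ≤ Λ k := fun k => by rw [hΛ]; positivity
  have hAA : ∀ v : EuclideanSpace ℝ (Fin n),
      ⟪v, ((ContinuousLinearMap.adjoint A).comp A) v⟫ = ‖A v‖ ^ 2 := by
    intro v
    rw [ContinuousLinearMap.comp_apply, ContinuousLinearMap.adjoint_inner_right,
      real_inner_self_eq_norm_sq]
  have hpsd : ∀ k v, 0 ≤ ⟪v, fderiv ℝ (gradient f) (x k) v⟫ + Λ k * ‖A v‖ ^ 2 := by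
    intro k v
    rw [aux_hess_comp ψ A b hψ f hf]
    have h1 := aux_lambdaMin_le (fderiv ℝ (gradient ψ) (A (x k) - b)) (A v)
    have h2 : -(lambdaMin (fderiv ℝ (gradient ψ) (A (x k) - b))) ≤ Λ k := by
      rw [hΛ]
      have h3 := le_max_left (-(lambdaMin (fderiv ℝ (gradient ψ) (A (x k) - b)))) 0
      have h4 := le_max_right (-(lambdaMin (fderiv ℝ (gradient ψ) (A (x k) - b)))) 0
      nlinarith
    nlinarith [sq_nonneg ‖A v‖]
  have hGd : ∀ k v, ⟪v, G k v⟫ = ⟪v, fderiv ℝ (gradient f) (x k) v⟫ + Λ k * ‖A v‖ ^ 2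
      + μ k * ‖v‖ ^ 2 := by
    intro k v
    rw [hG, ← hAA, ← real_inner_self_eq_norm_sq]
    simp only [add_apply, smul_apply, inner_add_right,
      inner_smul_right, ContinuousLinearMap.id_apply]
  have hFq : ∀ k, F (x k) - qhat k (xhat k) = φ (x k) - φ (xhat k) - ⟪gradient f (x k), d k⟫
      - 1 / 2 * (⟪d k, fderiv ℝ (gradient f) (x k) (d k)⟫ + Λ k * ‖A (d k)‖ ^ 2
      + μ k * ‖d k‖ ^ 2) := by
    intro k
    rw [hF, hqhat, ← hd, hGd]; ring
  have hpred' : ∀ k, pred k = φ (x k) - φ (xhat k) - ⟪gradient f (x k), d k⟫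
      - 1 / 2 * ⟪d k, fderiv ℝ (gradient f) (x k) (d k)⟫ := by
    intro k
    rw [hpred, hF, hq, ← hd]; ring
  have hpred_ge : ∀ k, (1 + α) / 2 * μ k * ‖d k‖ ^ 2 ≤ pred k := by
    intro k
    have h1 := hinex2 k
    rw [hFq, ← hd] at h1
    rw [hpred']
    have h2 : 0 ≤ Λ k * ‖A (d k)‖ ^ 2 := mul_nonneg (hΛ0 k) (sq_nonneg _)
    linarith
  -- lower bound for the step
  have hdlow : ∀ᶠ k in atTop, (1 - θ) * ‖resid f φ (x k)‖ ≤ (2 + CH + μ k) * ‖d k‖ := by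
    filter_upwards [hC1, hC2] with k h1 h2
    have hΛle : Λ k ≤ a * C2 := by
      rw [hΛ]
      have h3 := aux_lambdaMin_ge (fderiv ℝ (gradient ψ) (A (x k) - b))
      gcongr
      exact max_le (by linarith) hC20
    have hGle : ‖G k‖ ≤ CH + μ k := by
      rw [hG]
      refine (norm_add_le _ _).trans (add_le_add ((norm_add_le _ _).trans (add_le_add h1 ?_)) ?_)
      · rw [norm_smul, Real.norm_of_nonneg (hΛ0 k)]
        gcongr
      · rw [norm_smul, Real.norm_of_nonneg (hμpos k).le]
        have := ContinuousLinearMap.norm_id_le (𝕜 := ℝ) (E := EuclideanSpace ℝ (Fin n))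
        exact mul_le_of_le_one_right (hμpos k).le this
    have hGd2 : ‖G k (d k)‖ ≤ (CH + μ k) * ‖d k‖ := (G k).le_of_opNorm_le hGle _
    have hne := aux_prox_nonexp φ hφ (x k - gradient f (x k))
      (xhat k - gradient f (x k) - G k (xhat k - x k))
    have hr : resid f φ (x k) = R k (xhat k) - d k - (proxPt φ (x k - gradient f (x k)) -
        proxPt φ (xhat k - gradient f (x k) - G k (xhat k - x k))) := by
      rw [hR, hd, resid]; abel
    have hz : x k - gradient f (x k) - (xhat k - gradient f (x k) - G k (xhat k - x k))
        = G k (d k) - d k := by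
      rw [hd]; abel
    rw [hz] at hne
    have h4 : ‖resid f φ (x k)‖ ≤ ‖R k (xhat k)‖ + ‖d k‖ + ‖G k (d k) - d k‖ := by
      conv_lhs => rw [hr]
      exact (norm_sub_le _ _).trans (add_le_add (norm_sub_le _ _) hne)
    have h5 := norm_sub_le (G k (d k)) (d k)
    have h6 : ‖R k (xhat k)‖ ≤ θ * ‖resid f φ (x k)‖ := (hinex1 k).trans (by
      gcongr; exact min_le_left _ _)
    linarith
  -- large μ implies success
  set e : ℝ := min e₁ e₂ with he
  have hepos : 0 < e := lt_min he₁ he₂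
  have h2p : 0 < 1 - 2 * pmin := by linarith
  have h1c : 0 < 1 - c₁ := by linarith
  set M : ℝ := 1 + 2 * (Cg + L) / (e / 2) + 2 * pmin * (2 + CH) / (1 - 2 * pmin)
    + (2 * K + C1) / (1 - c₁) with hM
  have hM1 : 0 ≤ 2 * (Cg + L) / (e / 2) := by positivity
  have hM2 : 0 ≤ 2 * pmin * (2 + CH) / (1 - 2 * pmin) := by positivity
  have hM3 : 0 ≤ (2 * K + C1) / (1 - c₁) := by positivity
  have hclose : ∀ᶠ k in atTop, dist (x k) xb < e / 2 :=
    (Metric.tendsto_nhds.1 hxb) _ (by positivity)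
  have hsucc : ∀ᶠ k in atTop, M ≤ μ k → ¬ unsucc k := by
    filter_upwards [hdlow, hCg, hC1, hclose] with k hdl hg hH hx hMk
    have hμk := hμpos k
    have hd0 : 0 < ‖d k‖ := by
      by_contra hcon
      have h0 : ‖d k‖ = 0 := le_antisymm (not_lt.1 hcon) (norm_nonneg _)
      rw [h0, mul_zero] at hdl
      have := mul_pos hθ1 (hrpos k)
      linarith
    have b1 : 2 * (Cg + L) < e / 2 * μ k := by
      have : 2 * (Cg + L) / (e / 2) < μ k := by linarith
      rw [div_lt_iff₀ (by positivity)] at this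
      linarith
    have b2 : 2 * pmin * (2 + CH) < μ k * (1 - 2 * pmin) := by
      have : 2 * pmin * (2 + CH) / (1 - 2 * pmin) < μ k := by linarith
      rwa [div_lt_iff₀ h2p] at this
    have b3 : 2 * K + C1 < μ k * (1 - c₁) := by
      have : (2 * K + C1) / (1 - c₁) < μ k := by linarith
      rwa [div_lt_iff₀ h1c] at this
    have hdsmall : ‖d k‖ < e / 2 := by
      have h1 := hinex2 k
      rw [hFq, ← hd] at h1
      have h2 := hφL (x k) (lt_of_lt_of_le hx (by have := min_le_left e₁ e₂; linarith)) (xhat k)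
      rw [← hd] at h2
      have h3 := (abs_le.1 (abs_real_inner_le_norm (gradient f (x k)) (d k))).1
      have h4 := hpsd k (d k)
      have h5 : ‖gradient f (x k)‖ * ‖d k‖ ≤ Cg * ‖d k‖ := by gcongr
      have h6 : 0 ≤ α * μ k / 2 * ‖d k‖ ^ 2 := by positivity
      have h7 : ‖d k‖ * (μ k * ‖d k‖) ≤ ‖d k‖ * (2 * (Cg + L)) := by nlinarith
      have h8 := le_of_mul_le_mul_left h7 hd0
      have h9 : μ k * ‖d k‖ < μ k * (e / 2) := by linarith
      exact lt_of_mul_lt_mul_left h9 hμk.le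
    have hpg := hpred_ge k
    have hpp : 1 / 2 * μ k * ‖d k‖ ^ 2 < pred k := by
      have : 0 < α / 2 * μ k * ‖d k‖ ^ 2 := by positivity
      linarith
    have hp0 : 0 < pred k := lt_of_le_of_lt (by positivity) hpp
    rw [hunsucc, not_or, not_le, not_le]
    constructor
    · have h1 : pmin * (1 - θ) * ‖d k‖ * min ‖resid f φ (x k)‖ (‖resid f φ (x k)‖ ^ κ)
          ≤ pmin * ‖d k‖ * ((1 - θ) * ‖resid f φ (x k)‖) := by
        calc _ ≤ pmin * (1 - θ) * ‖d k‖ * ‖resid f φ (x k)‖ := by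
              gcongr; exact min_le_left _ _
          _ = _ := by ring
      have h2 : pmin * ‖d k‖ * ((1 - θ) * ‖resid f φ (x k)‖)
          ≤ pmin * ‖d k‖ * ((2 + CH + μ k) * ‖d k‖) := by gcongr
      have h3 : pmin * (2 + CH + μ k) * ‖d k‖ ^ 2 ≤ 1 / 2 * μ k * ‖d k‖ ^ 2 := by
        refine mul_le_mul_of_nonneg_right ?_ (sq_nonneg _)
        linarith
      linarith
    · rw [hρ, lt_div_iff₀ hp0, hared]
      have hxe : dist (x k) xb < e₂ := lt_of_lt_of_le hx (by
        have := min_le_right e₁ e₂; linarith)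
      have hxhe : dist (xhat k) xb < e₂ := by
        have h1 := dist_triangle (xhat k) (x k) xb
        rw [dist_eq_norm (xhat k) (x k), ← hd] at h1
        have := min_le_right e₁ e₂
        linarith
      have h1 := hTay (x k) (xhat k) hxe hxhe
      rw [← hd] at h1
      have h2 := (abs_le.1 (abs_real_inner_le_norm (d k) (fderiv ℝ (gradient f) (x k) (d k)))).1
      have h3 : ‖fderiv ℝ (gradient f) (x k) (d k)‖ ≤ C1 * ‖d k‖ :=
        ContinuousLinearMap.le_of_opNorm_le _ hH _
      have h4 : ‖d k‖ * ‖fderiv ℝ (gradient f) (x k) (d k)‖ ≤ ‖d k‖ * (C1 * ‖d k‖) := by gcongr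
      have h5 : pred k - (F (x k) - F (xhat k)) ≤ (K + C1 / 2) * ‖d k‖ ^ 2 := by
        rw [hpred', hF, hF]
        nlinarith
      have h6 : (K + C1 / 2) * ‖d k‖ ^ 2 ≤ (1 - c₁) * (1 / 2 * μ k * ‖d k‖ ^ 2) := by
        have : (K + C1 / 2) * ‖d k‖ ^ 2 ≤ (μ k * (1 - c₁) / 2) * ‖d k‖ ^ 2 := by
          gcongr; linarith
        linarith
      have h7 : (1 - c₁) * (1 / 2 * μ k * ‖d k‖ ^ 2) < (1 - c₁) * pred k := by gcongr
      linarith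
  -- ν is bounded
  obtain ⟨N, hN⟩ := eventually_atTop.1 (hsucc.and hdlow)
  set B : ℝ := max (ν N) (max νbar (σ₂ * (M / ε ^ δ))) with hB
  have hνB : ∀ k, N ≤ k → ν k ≤ B := by
    intro k hk
    induction k, hk using Nat.le_induction with
    | base => exact le_max_left _ _
    | succ k hk ih =>
      by_cases h : unsucc k
      · rw [((hupd k).1 h).2]
        have h1 : μ k < M := by
          by_contra hcon
          exact (hN k hk).1 (not_lt.1 hcon) h
        have h2 : ν k ≤ M / ε ^ δ := by
          rw [le_div_iff₀ hεδ]
          exact (hμ_ge k).trans h1.le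
        refine le_trans ?_ ((le_max_right _ _).trans (le_max_right _ _))
        gcongr
      · have : ν (k + 1) ≤ νbar := by
          by_cases h' : ρ k ≤ c₂
          · rw [((hupd k).2 h).2.1 h']; exact min_le_right _ _
          · rw [((hupd k).2 h).2.2 (not_le.1 h')]; exact min_le_right _ _
        exact this.trans ((le_max_left _ _).trans (le_max_right _ _))
  have hrb0 : 0 < rbar 0 ^ δ := Real.rpow_pos_of_pos (hε.trans_le (hrbar_ge 0)) _
  have hBpos : 0 < B := lt_of_lt_of_le (hνpos N) (le_max_left _ _)
  set D : ℝ := 2 + CH + B * rbar 0 ^ δ with hDdef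
  have hDpos : 0 < D := by positivity
  have hdbig : ∀ k, N ≤ k → (1 - θ) * ε / D ≤ ‖d k‖ := by
    intro k hk
    rw [div_le_iff₀ hDpos]
    have h1 := (hN k hk).2
    have h2 : (1 - θ) * ε ≤ (1 - θ) * ‖resid f φ (x k)‖ := by gcongr; exact hrε k
    have h3 : μ k ≤ B * rbar 0 ^ δ := (hμ_le k).trans (by gcongr; exact hνB k hk)
    have h4 : (2 + CH + μ k) * ‖d k‖ ≤ D * ‖d k‖ := by
      refine mul_le_mul_of_nonneg_right ?_ (norm_nonneg _)
      linarith
    linarith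
  -- eventually all iterations are unsuccessful
  have hgap : 0 < (1 - θ) * ε / D := by positivity
  obtain ⟨N', hN'⟩ := eventually_atTop.1 (hstep0.eventually (gt_mem_nhds hgap))
  have hun : ∀ k, max N N' ≤ k → unsucc k := by
    intro k hk
    by_contra h
    have h1 := hN' k ((le_max_right _ _).trans hk)
    rw [((hupd k).2 h).1, ← hd] at h1
    exact absurd (hdbig k ((le_max_left _ _).trans hk)) (not_le.2 h1)
  have hgrow : ∀ j, ν (max N N' + j) = σ₂ ^ j * ν (max N N') := by
    intro j
    induction j with
    | zero => simp
    | succ j ih =>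
      rw [← add_assoc, ((hupd _).1 (hun _ (Nat.le_add_right _ _))).2, ih]; ring
  obtain ⟨j, hj⟩ := pow_unbounded_of_one_lt (B / ν (max N N')) hσ₂
  rw [div_lt_iff₀ (hνpos _)] at hj
  have h1 := hνB (max N N' + j) ((le_max_left _ _).trans (Nat.le_add_right _ _))
  rw [hgrow] at h1
  linarith
end
end

section
/- Under the algorithmic setting below, assume additionally that ∇f is uniformly continuous on a set X ⊆ ℝⁿ containing all iterates {x^k}. Then lim_{k→∞} ‖r(x^k)‖ = 0; in particular, every accumulation point of {x^k} is a stationary point of F (i.e., satisfies 0 ∈ ∇f(x) + ∂φ(x)). -/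
open scoped RealInnerProductSpace
open Filter Metric

noncomputable section

section Helpers

variable {n : ℕ}

local notation "EE" => EuclideanSpace ℝ (Fin n)

lemma phi_cont {φ : EE → ℝ} (hφ : ConvexOn ℝ Set.univ φ) : Continuous φ := by
  rw [← continuousOn_univ]
  exact hφ.continuousOn isOpen_univ

/-- linear lower bound for a finite convex function -/
lemma phi_lower {φ : EE → ℝ} (hφ : ConvexOn ℝ Set.univ φ) :
    ∃ C : ℝ, 0 ≤ C ∧ ∀ y, -(C * (1 + ‖y‖)) ≤ φ y := by
  have hc := phi_cont hφ
  obtain ⟨C, hC⟩ := (isCompact_closedBall (0 : EE) 1).exists_bound_of_continuousOn hc.continuousOn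
  have h0 := hC 0 (by simp)
  rw [Real.norm_eq_abs] at h0
  have hC0 : 0 ≤ C := (abs_nonneg _).trans h0
  refine ⟨2 * C, by linarith, fun y => ?_⟩
  by_cases hy : ‖y‖ ≤ 1
  · have h1 := hC y (by simpa using hy)
    rw [Real.norm_eq_abs] at h1
    have := (abs_le.1 h1).1
    nlinarith [norm_nonneg y]
  · push Not at hy
    have hpos : 0 < ‖y‖ := by linarith
    have h1 := hC (‖y‖⁻¹ • y) (by
      rw [mem_closedBall_zero_iff, norm_smul, norm_inv, norm_norm, inv_mul_cancel₀ hpos.ne'])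
    rw [Real.norm_eq_abs] at h1
    have h2 := hφ.2 (Set.mem_univ (0 : EE)) (Set.mem_univ y)
      (show (0 : ℝ) ≤ 1 - ‖y‖⁻¹ by have := inv_le_one_of_one_le₀ hy.le; linarith)
      (show (0 : ℝ) ≤ ‖y‖⁻¹ by positivity) (by ring)
    simp only [smul_zero, zero_add, smul_eq_mul] at h2
    have h3 := (abs_le.1 h1).1
    have h4 := (abs_le.1 h0).2
    have h5 : -C * ‖y‖ ≤ (‖y‖ - 1) * φ 0 + φ y := by
      have : -C * ‖y‖ ≤ ((1 - ‖y‖⁻¹) * φ 0 + ‖y‖⁻¹ * φ y) * ‖y‖ :=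
        mul_le_mul_of_nonneg_right (h3.trans h2) hpos.le
      have e : ((1 - ‖y‖⁻¹) * φ 0 + ‖y‖⁻¹ * φ y) * ‖y‖ = (‖y‖ - 1) * φ 0 + φ y := by
        field_simp
      linarith
    nlinarith

lemma prox_exists {φ : EE → ℝ} (hφ : ConvexOn ℝ Set.univ φ) (z : EE) :
    ∃ p, ∀ y, φ p + (1 / 2) * ‖p - z‖ ^ 2 ≤ φ y + (1 / 2) * ‖y - z‖ ^ 2 := by
  obtain ⟨C, hC0, hC⟩ := phi_lower hφ
  have hcont : Continuous fun y => φ y + (1 / 2) * ‖y - z‖ ^ 2 := by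
    have := phi_cont hφ
    fun_prop
  set D : ℝ := 1 + 2 * (C + C * (1 + ‖z‖) + |φ z|) with hD
  refine hcont.exists_forall_le' z ?_
  have hz := norm_nonneg z
  have hb : (closedBall z D)ᶜ ∈ cocompact EE := (isCompact_closedBall z D).compl_mem_cocompact
  filter_upwards [hb] with y hy
  simp only [Set.mem_compl_iff, mem_closedBall, dist_eq_norm, not_le] at hy
  have h1 := hC y
  have h2 : ‖y‖ ≤ ‖y - z‖ + ‖z‖ := by
    simpa using norm_add_le (y - z) z
  have h3 := le_abs_self (φ z)
  have h4 := abs_nonneg (φ z)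
  have h6 : 0 ≤ C * (1 + ‖z‖) := by positivity
  simp only [sub_self, norm_zero]
  have h5 : 1 ≤ ‖y - z‖ := by linarith
  have h7 : C * (1 + ‖y‖) ≤ C * (1 + ‖z‖) + C * ‖y - z‖ := by nlinarith
  nlinarith [mul_nonneg (sub_nonneg.2 h5) h6, mul_nonneg (sub_nonneg.2 h5) h4]

lemma prox_spec {φ : EE → ℝ} (hφ : ConvexOn ℝ Set.univ φ) (z : EE) :
    ∀ y, φ (proxPt φ z) + (1 / 2) * ‖proxPt φ z - z‖ ^ 2 ≤ φ y + (1 / 2) * ‖y - z‖ ^ 2 :=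
  Classical.epsilon_spec (p := fun p => ∀ y, φ p + (1 / 2) * ‖p - z‖ ^ 2 ≤
    φ y + (1 / 2) * ‖y - z‖ ^ 2) (prox_exists hφ z)

lemma prox_subdiff {φ : EE → ℝ} (hφ : ConvexOn ℝ Set.univ φ) (z : EE) :
    z - proxPt φ z ∈ subdiff φ (proxPt φ z) := by
  intro y
  have hs := prox_spec hφ z
  set p := proxPt φ z
  by_contra hcon
  push Not at hcon
  set S := ‖y - p‖ ^ 2 with hS
  have hS0 : 0 ≤ S := by positivity
  set g := φ p + ⟪z - p, y - p⟫ - φ y with hg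
  have hg0 : 0 < g := by linarith
  have key : ∀ t : ℝ, 0 < t → t ≤ 1 → g ≤ t / 2 * S := by
    intro t ht ht1
    have h1 := hs ((1 - t) • p + t • y)
    have h2 := hφ.2 (Set.mem_univ p) (Set.mem_univ y)
      (show (0 : ℝ) ≤ 1 - t by linarith) ht.le (by ring)
    simp only [smul_eq_mul] at h2
    have h3 : (1 - t) • p + t • y - z = t • (y - p) - (z - p) := by
      module
    have h4 : ‖p - z‖ = ‖z - p‖ := norm_sub_rev _ _
    rw [h3, norm_sub_sq_real (t • (y - p)), h4, inner_smul_left, norm_smul, mul_pow, Real.norm_eq_abs, sq_abs,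
      real_inner_comm, ← hS] at h1
    simp only [conj_trivial] at h1
    have h5 : t * g ≤ t * (t / 2 * S) := by
      rw [hg]; nlinarith
    exact le_of_mul_le_mul_left h5 ht
  have hq : 0 < g / (S + 1) := by positivity
  have h6 := key (min 1 (g / (S + 1))) (lt_min one_pos hq) (min_le_left _ _)
  have h7 : min 1 (g / (S + 1)) / 2 * S ≤ g / (S + 1) / 2 * S := by
    gcongr
    exact min_le_right _ _
  have h8 : g / (S + 1) * (S + 1) = g := by field_simp
  nlinarith

lemma prox_nonexp {φ : EE → ℝ} (hφ : ConvexOn ℝ Set.univ φ) (z w : EE) :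
    ‖proxPt φ z - proxPt φ w‖ ≤ ‖z - w‖ := by
  have h1 := prox_subdiff hφ z (proxPt φ w)
  have h2 := prox_subdiff hφ w (proxPt φ z)
  set p := proxPt φ z
  set q := proxPt φ w
  have h3 : ‖p - q‖ ^ 2 ≤ ⟪z - w, p - q⟫ := by
    have e : ⟪z - p, q - p⟫ + ⟪w - q, p - q⟫ = ‖p - q‖ ^ 2 - ⟪z - w, p - q⟫ := by
      rw [← real_inner_self_eq_norm_sq]
      simp only [inner_sub_left, inner_sub_right]
      ring
    linarith
  have h4 := real_inner_le_norm (z - w) (p - q)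
  by_contra hc
  push Not at hc
  nlinarith [norm_nonneg (z - w)]

lemma resid_diff {f φ : EE → ℝ} (hφ : ConvexOn ℝ Set.univ φ) (x y : EE) :
    ‖resid f φ x - resid f φ y‖ ≤ 2 * ‖x - y‖ + ‖gradient f x - gradient f y‖ := by
  unfold resid
  have h1 := prox_nonexp hφ (x - gradient f x) (y - gradient f y)
  have h2 : x - gradient f x - (y - gradient f y) = (x - y) - (gradient f x - gradient f y) := by
    abel
  rw [h2] at h1
  have h3 := norm_sub_le (x - y) (gradient f x - gradient f y)
  have h4 := norm_sub_le (x - y)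
    (proxPt φ (x - gradient f x) - proxPt φ (y - gradient f y))
  have h5 : x - proxPt φ (x - gradient f x) - (y - proxPt φ (y - gradient f y)) =
    (x - y) - (proxPt φ (x - gradient f x) - proxPt φ (y - gradient f y)) := by abel
  rw [h5]; linarith

lemma grad_contDiff {f : EE → ℝ} (hf : ContDiff ℝ 2 f) : ContDiff ℝ 1 (gradient f) := by
  have h : ContDiff ℝ 1 (fderiv ℝ f) := hf.fderiv_right (by norm_num)
  exact (InnerProductSpace.toDual ℝ EE).symm.contDiff.comp h

lemma hess_bound {f : EE → ℝ} (hf : ContDiff ℝ 2 f) (B : ℝ) :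
    ∃ L : ℝ, 0 ≤ L ∧ ∀ x : EE, ‖x‖ ≤ B → ‖fderiv ℝ (gradient f) x‖ ≤ L := by
  have hc : Continuous (fderiv ℝ (gradient f)) := (grad_contDiff hf).continuous_fderiv (by norm_num)
  obtain ⟨C, hC⟩ := (isCompact_closedBall (0 : EE) B).exists_bound_of_continuousOn hc.continuousOn
  exact ⟨max C 0, le_max_right _ _, fun x hx => (hC x (by simpa using hx)).trans (le_max_left _ _)⟩

lemma taylor_bound {f : EE → ℝ} (hf : ContDiff ℝ 2 f) {B L : ℝ}
    (hL : ∀ x : EE, ‖x‖ ≤ B → ‖fderiv ℝ (gradient f) x‖ ≤ L) {x y : EE} (hx : ‖x‖ ≤ B)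
    (hy : ‖y‖ ≤ B) :
    f y - f x - ⟪gradient f x, y - x⟫ - (1 / 2) * ⟪y - x, (fderiv ℝ (gradient f) x) (y - x)⟫
      ≤ 2 * L * ‖y - x‖ ^ 2 := by
  have hL0 : 0 ≤ L := (norm_nonneg _).trans (hL x hx)
  have hgd : ∀ z, DifferentiableAt ℝ (gradient f) z :=
    fun z => (grad_contDiff hf).differentiable (by norm_num) z
  have hfd : ∀ z, DifferentiableAt ℝ f z := fun z => hf.differentiable (by norm_num) z
  have hball : ∀ z ∈ segment ℝ x y, ‖z‖ ≤ B := by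
    intro z hz
    have := (convex_closedBall (0 : EE) B).segment_subset (by simpa using hx) (by simpa using hy) hz
    simpa using this
  have hseg : ∀ z ∈ segment ℝ x y, ‖z - x‖ ≤ ‖y - x‖ := by
    intro z hz
    have := (convex_closedBall x ‖y - x‖).segment_subset (by simp)
      (by simp [dist_eq_norm]) hz
    simpa [dist_eq_norm] using this
  have hlip : ∀ z ∈ segment ℝ x y, ‖gradient f z - gradient f x‖ ≤ L * ‖y - x‖ := by
    intro z hz
    have h := (convex_segment x y).norm_image_sub_le_of_norm_fderiv_le (𝕜 := ℝ)
      (fun w _ => hgd w) (fun w hw => hL w (hball w hw)) (left_mem_segment ℝ x y) hz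
    exact h.trans (mul_le_mul_of_nonneg_left (hseg z hz) hL0)
  have hmain := (convex_segment x y).norm_image_sub_le_of_norm_fderiv_le' (𝕜 := ℝ) (f := f)
      (φ := fderiv ℝ f x) (C := L * ‖y - x‖)
      (fun w _ => hfd w) (fun w hw => by
        have h := hlip w hw
        have e : gradient f w - gradient f x =
          (InnerProductSpace.toDual ℝ EE).symm (fderiv ℝ f w - fderiv ℝ f x) := by
          simp [gradient]
        rw [e, LinearIsometryEquiv.norm_map] at h
        exact h) (left_mem_segment ℝ x y) (right_mem_segment ℝ x y)
  have e2 : fderiv ℝ f x (y - x) = ⟪gradient f x, y - x⟫ := by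
    simp [gradient]
  rw [e2, Real.norm_eq_abs] at hmain
  have h1 := (abs_le.1 hmain).2
  have h2 : |⟪y - x, (fderiv ℝ (gradient f) x) (y - x)⟫| ≤ L * ‖y - x‖ ^ 2 := by
    refine (abs_real_inner_le_norm _ _).trans ?_
    have := (fderiv ℝ (gradient f) x).le_of_opNorm_le (hL x hx) (y - x)
    nlinarith [norm_nonneg (y - x)]
  have h3 := (abs_le.1 h2).1
  have h4 : 0 ≤ L * ‖y - x‖ ^ 2 := by positivity
  nlinarith

lemma lambdaMin_bound {m : ℕ}
    (T : EuclideanSpace ℝ (Fin m) →L[ℝ] EuclideanSpace ℝ (Fin m)) : -lambdaMin T ≤ ‖T‖ := by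
  unfold lambdaMin
  rw [neg_le]
  rcases isEmpty_or_nonempty {u : EuclideanSpace ℝ (Fin m) // ‖u‖ = 1} with h | h
  · rw [Real.iInf_of_isEmpty]
    simp
  · refine le_ciInf fun u => ?_
    have h1 := abs_real_inner_le_norm (T u.1) u.1
    have h2 := T.le_opNorm u.1
    rw [u.2] at h1 h2
    have := (abs_le.1 h1).1
    linarith

lemma resid_le {f φ : EE → ℝ} (hφ : ConvexOn ℝ Set.univ φ) {θ : ℝ} (x y : EE)
    (G : EE →L[ℝ] EE)
    (hR : ‖y - proxPt φ (y - gradient f x - G (y - x))‖ ≤ θ * ‖resid f φ x‖) :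
    (1 - θ) * ‖resid f φ x‖ ≤ (2 + ‖G‖) * ‖y - x‖ := by
  have h1 := prox_nonexp hφ (x - gradient f x) (y - gradient f x - G (y - x))
  have e1 : x - gradient f x - (y - gradient f x - G (y - x)) = G (y - x) - (y - x) := by abel
  rw [e1] at h1
  have h2 := norm_sub_le (G (y - x)) (y - x)
  have h3 := G.le_opNorm (y - x)
  have e2 : resid f φ x = (y - proxPt φ (y - gradient f x - G (y - x))) - (y - x)
      - (proxPt φ (x - gradient f x) - proxPt φ (y - gradient f x - G (y - x))) := by
    unfold resid; abel
  have h4 : ‖resid f φ x‖ ≤ ‖y - proxPt φ (y - gradient f x - G (y - x))‖ + ‖y - x‖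
      + ‖proxPt φ (x - gradient f x) - proxPt φ (y - gradient f x - G (y - x))‖ := by
    conv_lhs => rw [e2]
    exact (norm_sub_le _ _).trans (add_le_add_left (norm_sub_le _ _) _)
  linarith

lemma step_bound {f φ : EE → ℝ} (hf : ContDiff ℝ 2 f) (hφ : ConvexOn ℝ Set.univ φ) (B : ℝ) :
    ∃ M D : ℝ, 0 < M ∧ ∀ (x y : EE) (μ : ℝ), ‖x‖ ≤ B → M ≤ μ →
      μ / 2 * ‖y - x‖ ^ 2 ≤ f x + φ x - (f x + ⟪gradient f x, y - x⟫
        + (1 / 2) * ⟪y - x, (fderiv ℝ (gradient f) x) (y - x)⟫ + φ y) → ‖y - x‖ ≤ D := by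
  obtain ⟨L, hL0, hL⟩ := hess_bound hf B
  obtain ⟨C, hC0, hC⟩ := phi_lower hφ
  obtain ⟨g, hg⟩ := (isCompact_closedBall (0 : EE) B).exists_bound_of_continuousOn
    (grad_contDiff hf).continuous.continuousOn
  obtain ⟨P, hP⟩ := (isCompact_closedBall (0 : EE) B).exists_bound_of_continuousOn
    (phi_cont hφ).continuousOn
  refine ⟨L + 2, g + P + 2 * C + C * B + 1, by linarith, fun x y μ hx hμ h => ?_⟩
  have hxB : x ∈ closedBall (0 : EE) B := by simpa using hx
  have hg1 := hg x hxB
  have hP1 := hP x hxB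
  rw [Real.norm_eq_abs] at hP1
  have hg0 : 0 ≤ g := (norm_nonneg _).trans hg1
  have hP0 : 0 ≤ P := (abs_nonneg _).trans hP1
  have hB0 : 0 ≤ B := (norm_nonneg _).trans hx
  have h1 := (abs_le.1 (abs_real_inner_le_norm (gradient f x) (y - x))).1
  have h2 := (abs_le.1 (abs_real_inner_le_norm (y - x) ((fderiv ℝ (gradient f) x) (y - x)))).1
  have h3 := (fderiv ℝ (gradient f) x).le_of_opNorm_le (hL x hx) (y - x)
  have h4 := hC y
  have h5 : ‖y‖ ≤ ‖y - x‖ + ‖x‖ := by simpa using norm_add_le (y - x) x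
  have h6 := (abs_le.1 hP1).2
  set t := ‖y - x‖
  have ht : 0 ≤ t := norm_nonneg _
  have h7 : ‖gradient f x‖ * t ≤ g * t := by gcongr
  have h8 : t * ‖(fderiv ℝ (gradient f) x) (y - x)‖ ≤ L * t ^ 2 := by nlinarith
  have h9 : C * (1 + ‖y‖) ≤ C * (1 + B + t) := by
    apply mul_le_mul_of_nonneg_left _ hC0; linarith
  have h10 : (L + 2) / 2 * t ^ 2 ≤ μ / 2 * t ^ 2 := by gcongr
  have h11 : t ^ 2 ≤ (g + C) * t + (P + C + C * B) := by nlinarith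
  by_contra hc
  push Not at hc
  have hCB : 0 ≤ C * B := by positivity
  have ht1 : 1 ≤ t := by linarith
  nlinarith [mul_nonneg (sub_nonneg.2 ht1) (show 0 ≤ P + C + C * B by linarith)]

lemma key_step {f φ : EE → ℝ} (hf : ContDiff ℝ 2 f) (hφ : ConvexOn ℝ Set.univ φ)
    {θ c₁ pmin : ℝ} (hθ' : θ < 1) (hc₁' : c₁ < 1) (hpmin : 0 < pmin)
    (hpmin' : pmin < 1 / 2) (B h : ℝ) :
    ∃ M : ℝ, 0 < M ∧ ∀ (x y : EE) (G : EE →L[ℝ] EE) (μ P : ℝ), ‖x‖ ≤ B → M ≤ μ → ‖G‖ ≤ h + μ →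
      0 < ‖resid f φ x‖ →
      ‖y - proxPt φ (y - gradient f x - G (y - x))‖ ≤ θ * ‖resid f φ x‖ →
      P = f x + φ x - (f x + ⟪gradient f x, y - x⟫
        + (1 / 2) * ⟪y - x, (fderiv ℝ (gradient f) x) (y - x)⟫ + φ y) →
      μ / 2 * ‖y - x‖ ^ 2 ≤ P →
      pmin * (1 - θ) * ‖y - x‖ * ‖resid f φ x‖ < P ∧ c₁ * P < f x + φ x - (f y + φ y) := by
  obtain ⟨M₀, D, hM₀, hD⟩ := step_bound hf hφ B
  obtain ⟨L, hL0, hL⟩ := hess_bound hf (B + D)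
  have hp : 0 < 1 - 2 * pmin := by linarith
  have hc : 0 < 1 - c₁ := by linarith
  refine ⟨max M₀ (max (2 * pmin * (2 + h) / (1 - 2 * pmin) + 1) (4 * L / (1 - c₁) + 1)),
    lt_max_of_lt_left hM₀, fun x y G μ P hx hμ hG hr hR hP hPμ => ?_⟩
  have hμ1 : M₀ ≤ μ := (le_max_left _ _).trans hμ
  have hμ2 : 2 * pmin * (2 + h) / (1 - 2 * pmin) < μ := by
    have := (le_max_left _ _).trans ((le_max_right _ _).trans hμ); linarith
  have hμ3 : 4 * L / (1 - c₁) < μ := by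
    have := (le_max_right _ _).trans ((le_max_right _ _).trans hμ); linarith
  rw [div_lt_iff₀ hp] at hμ2
  rw [div_lt_iff₀ hc] at hμ3
  have hd := hD x y μ hx hμ1 (by rw [← hP]; exact hPμ)
  have hres := resid_le hφ x y G hR
  have hdpos : 0 < ‖y - x‖ := by
    rcases (norm_nonneg (y - x)).eq_or_lt with h0 | h0
    · rw [← h0] at hres
      have : 0 < (1 - θ) * ‖resid f φ x‖ := mul_pos (by linarith) hr
      linarith
    · exact h0
  have hD0 : 0 ≤ D := hdpos.le.trans hd
  have hy : ‖y‖ ≤ B + D := by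
    have : ‖y‖ ≤ ‖y - x‖ + ‖x‖ := by simpa using norm_add_le (y - x) x
    linarith
  have htay := taylor_bound hf hL (x := x) (y := y) (by linarith) hy
  set t := ‖y - x‖
  have ht2 : 0 < t ^ 2 := by positivity
  constructor
  · have h1 : (1 - θ) * ‖resid f φ x‖ ≤ (2 + h + μ) * t :=
      hres.trans (mul_le_mul_of_nonneg_right (by linarith) hdpos.le)
    have h2 : pmin * (1 - θ) * t * ‖resid f φ x‖ ≤ pmin * t * ((2 + h + μ) * t) := by
      have := mul_le_mul_of_nonneg_left h1 (show 0 ≤ pmin * t by positivity)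
      linarith
    have h3 : pmin * (2 + h + μ) * t ^ 2 < μ / 2 * t ^ 2 :=
      mul_lt_mul_of_pos_right (by linarith) ht2
    linarith
  · have h1 : 2 * L * t ^ 2 < (1 - c₁) * (μ / 2 * t ^ 2) := by
      have := mul_lt_mul_of_pos_right hμ3 ht2
      linarith
    have h2 := mul_le_mul_of_nonneg_left hPμ hc.le
    linarith

/-- telescoping -/
lemma tele (x : ℕ → EE) (r Fs : ℕ → ℝ) {ε c : ℝ}
    (hC : ∀ k, ε ≤ r k → c * ‖x (k + 1) - x k‖ ≤ Fs k - Fs (k + 1)) (hc : 0 ≤ c)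
    (k l : ℕ) (hkl : k ≤ l) (h : ∀ j, k ≤ j → j < l → ε ≤ r j) :
    c * ‖x l - x k‖ ≤ Fs k - Fs l := by
  induction l, hkl using Nat.le_induction with
  | base => simp
  | succ l hl ih =>
    have h1 := ih fun j hj hjl => h j hj (by omega)
    have h2 := hC l (h l hl (by omega))
    have h3 : ‖x (l + 1) - x k‖ ≤ ‖x (l + 1) - x l‖ + ‖x l - x k‖ := by
      simpa using norm_add_le (x (l + 1) - x l) (x l - x k)
    nlinarith

lemma lim_of_liminf (x : ℕ → EE) (r Fs : ℕ → ℝ) (hr0 : ∀ k, 0 ≤ r k) (hmono : Antitone Fs)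
    (hbdd : BddBelow (Set.range Fs))
    (hC : ∀ ε > 0, ∃ c > 0, ∀ k, ε ≤ r k → c * ‖x (k + 1) - x k‖ ≤ Fs k - Fs (k + 1))
    (hinf : ∀ ε > 0, ∀ N, ∃ k, N ≤ k ∧ r k < ε)
    (huc : ∀ ε > 0, ∃ s > 0, ∀ k l, ‖x l - x k‖ < s → |r l - r k| < ε) :
    Tendsto r atTop (nhds 0) := by
  rw [Metric.tendsto_atTop]
  intro ε hε
  have hε2 : 0 < ε / 2 := by linarith
  obtain ⟨c, hc, hC⟩ := hC (ε / 2) hε2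
  obtain ⟨s, hs, huc⟩ := huc (ε / 2) hε2
  have hlim := tendsto_atTop_ciInf hmono hbdd
  obtain ⟨N, hN⟩ := Metric.tendsto_atTop.1 hlim (c * s) (by positivity)
  refine ⟨N, fun k hk => ?_⟩
  rw [Real.dist_eq, sub_zero, abs_of_nonneg (hr0 k)]
  by_contra hcon
  push Not at hcon
  classical
  have hex := hinf (ε / 2) hε2 k
  have hsp := Nat.find_spec hex
  set l := Nat.find hex
  have hkl : k ≤ l := hsp.1
  have htl := tele x r Fs hC hc.le k l hkl (fun j hj hjl => by
    have := Nat.find_min hex hjl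
    push Not at this
    exact this hj)
  have h1 := hN k hk
  have h2 : iInf Fs ≤ Fs l := ciInf_le hbdd l
  rw [Real.dist_eq] at h1
  have h3 := (abs_lt.1 h1).2
  have h4 : ‖x l - x k‖ < s := by
    by_contra h5
    push Not at h5
    have := mul_le_mul_of_nonneg_left h5 hc.le
    linarith
  have h5 := (abs_lt.1 (huc k l h4)).1
  linarith

end Helpers

/-- Theorem 4.6: if `∇f` is uniformly continuous on a set `X` containing all iterates, then
`lim_{k→∞} ‖r(xᵏ)‖ = 0`; in particular every accumulation point `x̄` of `{xᵏ}` is a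
stationary point of `F`, i.e. `0 ∈ ∇f(x̄) + ∂φ(x̄)`. -/
theorem stmt_9 {n m : ℕ}
    -- problem data: f(x) = ψ(Ax − b), F = f + φ bounded below, φ convex, ψ C²
    (ψ : EuclideanSpace ℝ (Fin m) → ℝ)
    (A : EuclideanSpace ℝ (Fin n) →L[ℝ] EuclideanSpace ℝ (Fin m))
    (b : EuclideanSpace ℝ (Fin m))
    (φ : EuclideanSpace ℝ (Fin n) → ℝ)
    (hψ : ContDiff ℝ 2 ψ) (hφ : ConvexOn ℝ Set.univ φ)
    (f F : EuclideanSpace ℝ (Fin n) → ℝ)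
    (hf : ∀ y, f y = ψ (A y - b)) (hF : ∀ y, F y = f y + φ y)
    (hFbdd : BddBelow (Set.range F))
    -- algorithm parameters
    (c₁ c₂ σ₁ σ₂ η θ α a νmin ν₀ νbar δ τ pmin κ : ℝ)
    (hc₁ : 0 < c₁) (hc₁' : c₁ < 1) (hc₂ : c₁ < c₂) (hc₂' : c₂ < 1)
    (hσ₁ : 0 < σ₁) (hσ₁' : σ₁ < 1) (hσ₂ : 1 < σ₂)
    (hη : 0 < η) (hη' : η < 1) (hθ : 0 < θ) (hθ' : θ < 1)
    (hα : 0 < α) (hα' : α < 1) (ha : 1 ≤ a)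
    (hνmin : 0 < νmin) (hν₀a : νmin ≤ ν₀) (hν₀b : ν₀ ≤ νbar)
    (hδ0 : 0 < δ) (hδ1 : δ ≤ 1) (hτ : δ ≤ τ)
    (hpmin : 0 < pmin) (hpmin' : pmin < 1 / 2) (hκ : 1 + δ < κ)
    -- iterates and regularization sequences
    (x xhat : ℕ → EuclideanSpace ℝ (Fin n)) (ν rbar μ : ℕ → ℝ)
    (hν0 : ν 0 = ν₀) (hrbar0 : rbar 0 = ‖resid f φ (x 0)‖)
    (hμ : ∀ k, μ k = ν k * rbar k ^ δ)
    -- Λ_k, H_k + μ_k I =: G_k, the models q_k, q̂_k, and the subproblem residual R_k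
    (Λ : ℕ → ℝ)
    (hΛ : ∀ k, Λ k = a * max (-(lambdaMin (fderiv ℝ (gradient ψ) (A (x k) - b)))) 0)
    (G : ℕ → EuclideanSpace ℝ (Fin n) →L[ℝ] EuclideanSpace ℝ (Fin n))
    (hG : ∀ k, G k = fderiv ℝ (gradient f) (x k)
        + Λ k • ((ContinuousLinearMap.adjoint A).comp A)
        + μ k • ContinuousLinearMap.id ℝ (EuclideanSpace ℝ (Fin n)))
    (q qhat : ℕ → EuclideanSpace ℝ (Fin n) → ℝ)
    (hq : ∀ k y, q k y = f (x k) + ⟪gradient f (x k), y - x k⟫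
        + (1 / 2) * ⟪y - x k, (fderiv ℝ (gradient f) (x k)) (y - x k)⟫ + φ y)
    (hqhat : ∀ k y, qhat k y = f (x k) + ⟪gradient f (x k), y - x k⟫
        + (1 / 2) * ⟪y - x k, (G k) (y - x k)⟫ + φ y)
    (R : ℕ → EuclideanSpace ℝ (Fin n) → EuclideanSpace ℝ (Fin n))
    (hR : ∀ k y, R k y = y - proxPt φ (y - gradient f (x k) - (G k) (y - x k)))
    -- the inexactness criteria satisfied by x̂ᵏ
    (hinex1 : ∀ k, ‖R k (xhat k)‖ ≤
        θ * min ‖resid f φ (x k)‖ (‖resid f φ (x k)‖ ^ (1 + τ)))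
    (hinex2 : ∀ k, α * μ k / 2 * ‖xhat k - x k‖ ^ 2 ≤ F (x k) - qhat k (xhat k))
    -- dᵏ, pred_k, ared_k, ρ_k
    (d : ℕ → EuclideanSpace ℝ (Fin n)) (hd : ∀ k, d k = xhat k - x k)
    (pred ared ρ : ℕ → ℝ)
    (hpred : ∀ k, pred k = F (x k) - q k (xhat k))
    (hared : ∀ k, ared k = F (x k) - F (xhat k))
    (hρ : ∀ k, ρ k = ared k / pred k)
    -- update rules (unsuccessful / successful / highly successful iterations)
    (unsucc : ℕ → Prop)
    (hunsucc : ∀ k, unsucc k ↔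
        pred k ≤ pmin * (1 - θ) * ‖d k‖ *
          min ‖resid f φ (x k)‖ (‖resid f φ (x k)‖ ^ κ) ∨ ρ k ≤ c₁)
    (hupd : ∀ k,
        (unsucc k → x (k + 1) = x k ∧ ν (k + 1) = σ₂ * ν k) ∧
        (¬unsucc k → x (k + 1) = xhat k ∧
          (ρ k ≤ c₂ → ν (k + 1) = min (ν k) νbar) ∧
          (c₂ < ρ k → ν (k + 1) = min (max (σ₁ * ν k) νmin) νbar)))
    (hrbarupd : ∀ k,
        (‖resid f φ (x (k + 1))‖ ≤ η * rbar k → rbar (k + 1) = ‖resid f φ (x (k + 1))‖) ∧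
        (¬‖resid f φ (x (k + 1))‖ ≤ η * rbar k → rbar (k + 1) = rbar k))
    -- no iterate is stationary (otherwise the algorithm terminates)
    (hrne : ∀ k, resid f φ (x k) ≠ 0)
    (X : Set (EuclideanSpace ℝ (Fin n)))
    (hX : ∀ k, x k ∈ X)
    (hUC : UniformContinuousOn (gradient f) X) :
    Tendsto (fun k => ‖resid f φ (x k)‖) atTop (nhds 0) ∧
    ∀ xb : EuclideanSpace ℝ (Fin n), MapClusterPt xb atTop x →
      (0 : EuclideanSpace ℝ (Fin n)) ∈ (fun v => gradient f xb + v) '' subdiff φ xb := by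
  
  have hfeq : f = fun y => ψ (A y - b) := funext hf
  have hfC : ContDiff ℝ 2 f := by
    rw [hfeq]
    exact hψ.comp (A.contDiff.sub contDiff_const)
  have hσ₂0 : 0 < σ₂ := by linarith
  have hθ1 : 0 < 1 - θ := by linarith
  have hrpos : ∀ k, 0 < ‖resid f φ (x k)‖ := fun k => norm_pos_iff.2 (hrne k)
  have hνpos : ∀ k, 0 < ν k := by
    intro k
    induction k with
    | zero => rw [hν0]; linarith
    | succ k ih =>
      by_cases hu : unsucc k
      · rw [((hupd k).1 hu).2]; positivity
      · obtain ⟨-, h1, h2⟩ := (hupd k).2 hu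
        rcases le_or_gt (ρ k) c₂ with h | h
        · rw [h1 h]; exact lt_min ih (by linarith)
        · rw [h2 h]; exact lt_min (lt_max_of_lt_right hνmin) (by linarith)
  have hrbpos : ∀ k, 0 < rbar k := by
    intro k
    induction k with
    | zero => rw [hrbar0]; exact hrpos 0
    | succ k ih =>
      by_cases hu : ‖resid f φ (x (k + 1))‖ ≤ η * rbar k
      · rw [(hrbarupd k).1 hu]; exact hrpos _
      · rw [(hrbarupd k).2 hu]; exact ih
  have hrb_le : ∀ k, rbar k ≤ rbar 0 := by
    intro k
    induction k with
    | zero => exact le_rfl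
    | succ k ih =>
      by_cases hu : ‖resid f φ (x (k + 1))‖ ≤ η * rbar k
      · rw [(hrbarupd k).1 hu]
        have := hrbpos k
        nlinarith
      · rw [(hrbarupd k).2 hu]; exact ih
  have hμpos : ∀ k, 0 < μ k := by
    intro k
    rw [hμ]
    exact mul_pos (hνpos k) (Real.rpow_pos_of_pos (hrbpos k) _)
  have hΛ0 : ∀ k, 0 ≤ Λ k := by
    intro k
    rw [hΛ]
    exact mul_nonneg (by linarith) (le_max_right _ _)
  -- predicted decrease
  have hpredμ : ∀ k, μ k / 2 * ‖xhat k - x k‖ ^ 2 ≤ pred k := by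
    intro k
    have h1 := hinex2 k
    rw [hqhat, hG] at h1
    rw [hpred, hq]
    simp only [add_apply, smul_apply,
      ContinuousLinearMap.comp_apply, ContinuousLinearMap.id_apply, inner_add_right,
      inner_smul_right, ContinuousLinearMap.adjoint_inner_right, real_inner_self_eq_norm_sq] at h1
    have h2 : 0 ≤ Λ k * ‖A (xhat k - x k)‖ ^ 2 := mul_nonneg (hΛ0 k) (sq_nonneg _)
    have h3 : 0 ≤ α * μ k / 2 * ‖xhat k - x k‖ ^ 2 := by
      have := hμpos k
      positivity
    linarith
  have hpredform : ∀ k, pred k = f (x k) + φ (x k) - (f (x k) + ⟪gradient f (x k), xhat k - x k⟫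
        + (1 / 2) * ⟪xhat k - x k, (fderiv ℝ (gradient f) (x k)) (xhat k - x k)⟫
        + φ (xhat k)) := by
    intro k
    rw [hpred, hq, hF]
  have hRk : ∀ k, ‖xhat k - proxPt φ (xhat k - gradient f (x k) - (G k) (xhat k - x k))‖ ≤
      θ * ‖resid f φ (x k)‖ := by
    intro k
    have := hinex1 k
    rw [hR] at this
    exact this.trans (mul_le_mul_of_nonneg_left (min_le_left _ _) hθ.le)
  -- decrease on each step
  have hdec : ∀ k, c₁ * (pmin * (1 - θ) * ‖x (k + 1) - x k‖ *
      min ‖resid f φ (x k)‖ (‖resid f φ (x k)‖ ^ κ)) ≤ F (x k) - F (x (k + 1)) := by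
    intro k
    by_cases hu : unsucc k
    · rw [((hupd k).1 hu).1]; simp
    · rw [((hupd k).2 hu).1, ← hd k, ← hared k]
      have hu' := hu
      rw [hunsucc] at hu'
      push Not at hu'
      obtain ⟨h1, h2⟩ := hu'
      have h3 : 0 ≤ pmin * (1 - θ) * ‖d k‖ *
          min ‖resid f φ (x k)‖ (‖resid f φ (x k)‖ ^ κ) := by
        have := (hrpos k).le
        positivity
      have hpp : 0 < pred k := h3.trans_lt h1
      rw [hρ, lt_div_iff₀ hpp] at h2
      exact (mul_le_mul_of_nonneg_left h1.le hc₁.le).trans h2.le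
  have hminpos : ∀ ε : ℝ, 0 < ε → 0 < min ε (ε ^ κ) := fun ε hε =>
    lt_min hε (Real.rpow_pos_of_pos hε _)
  have hC : ∀ ε > 0, ∃ c > 0, ∀ k, ε ≤ ‖resid f φ (x k)‖ →
      c * ‖x (k + 1) - x k‖ ≤ F (x k) - F (x (k + 1)) := by
    intro ε hε
    have hm := hminpos ε hε
    refine ⟨c₁ * (pmin * (1 - θ) * min ε (ε ^ κ)), by positivity, fun k hk => ?_⟩
    refine le_trans ?_ (hdec k)
    have h1 : min ε (ε ^ κ) ≤ min ‖resid f φ (x k)‖ (‖resid f φ (x k)‖ ^ κ) :=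
      min_le_min hk (Real.rpow_le_rpow hε.le hk (by linarith))
    have h2 : 0 ≤ c₁ * (pmin * (1 - θ) * ‖x (k + 1) - x k‖) := by positivity
    have h3 := mul_le_mul_of_nonneg_left h1 h2
    linarith
  have hmono : Antitone fun k => F (x k) := by
    refine antitone_nat_of_succ_le fun k => ?_
    have h1 := hdec k
    have h2 := hminpos _ (hrpos k)
    have h3 : 0 ≤ c₁ * (pmin * (1 - θ) * ‖x (k + 1) - x k‖ *
      min ‖resid f φ (x k)‖ (‖resid f φ (x k)‖ ^ κ)) := by positivity
    linarith
  have hbdd : BddBelow (Set.range fun k => F (x k)) :=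
    hFbdd.mono (by rintro _ ⟨k, rfl⟩; exact ⟨x k, rfl⟩)
  -- liminf of the residuals is zero
  have hinf : ∀ ε > 0, ∀ N, ∃ k, N ≤ k ∧ ‖resid f φ (x k)‖ < ε := by
    intro ε hε N
    by_contra hcon
    push Not at hcon
    obtain ⟨c, hc, hCc⟩ := hC ε hε
    obtain ⟨m₀, hm₀⟩ := hbdd
    have hm₀' : ∀ k, m₀ ≤ F (x k) := fun k => hm₀ ⟨k, rfl⟩
    -- boundedness of the iterates
    obtain ⟨B, hB⟩ : ∃ B, ∀ k, N ≤ k → ‖x k‖ ≤ B := by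
      refine ⟨(F (x N) - m₀) / c + ‖x N‖, fun k hk => ?_⟩
      have h1 := tele x (fun k => ‖resid f φ (x k)‖) (fun k => F (x k)) hCc hc.le N k hk
        (fun j hj _ => hcon j hj)
      have h2 : ‖x k - x N‖ ≤ (F (x N) - m₀) / c := by
        rw [le_div_iff₀ hc]
        have := hm₀' k
        linarith
      have h3 : ‖x k‖ ≤ ‖x k - x N‖ + ‖x N‖ := by simpa using norm_add_le (x k - x N) (x N)
      linarith
    -- boundedness of the Hessian approximations
    obtain ⟨L, hL0, hL⟩ := hess_bound hfC B
    obtain ⟨L', hL'0, hL'⟩ := hess_bound hψ (‖A‖ * B + ‖b‖)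
    have hGb : ∀ k, N ≤ k → ‖G k‖ ≤ (L + a * L' * (‖A‖ * ‖A‖)) + μ k := by
      intro k hk
      rw [hG]
      have h1 := hL (x k) (hB k hk)
      have h2 : ‖A (x k) - b‖ ≤ ‖A‖ * B + ‖b‖ := by
        refine (norm_sub_le _ _).trans ?_
        have h4 := A.le_opNorm (x k)
        have h5 := mul_le_mul_of_nonneg_left (hB k hk) (norm_nonneg A)
        linarith
      have h3 := (lambdaMin_bound _).trans (hL' _ h2)
      have h4 : Λ k ≤ a * L' := by
        rw [hΛ]
        exact mul_le_mul_of_nonneg_left (max_le h3 hL'0) (by linarith)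
      have h5 : ‖(ContinuousLinearMap.adjoint A).comp A‖ ≤ ‖A‖ * ‖A‖ := by
        refine (ContinuousLinearMap.opNorm_comp_le _ _).trans ?_
        rw [LinearIsometryEquiv.norm_map]
      have h6 : ‖Λ k • ((ContinuousLinearMap.adjoint A).comp A)‖ ≤ a * L' * (‖A‖ * ‖A‖) := by
        rw [norm_smul, Real.norm_of_nonneg (hΛ0 k)]
        exact mul_le_mul h4 h5 (norm_nonneg _) (mul_nonneg (by linarith) hL'0)
      have h7 : ‖μ k • ContinuousLinearMap.id ℝ (EuclideanSpace ℝ (Fin n))‖ ≤ μ k := by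
        rw [norm_smul, Real.norm_of_nonneg (hμpos k).le]
        have := ContinuousLinearMap.norm_id_le (𝕜 := ℝ) (E := EuclideanSpace ℝ (Fin n))
        have h8 := hμpos k
        nlinarith
      exact (norm_add_le _ _).trans (add_le_add ((norm_add_le _ _).trans (add_le_add h1 h6)) h7)
    set h₀ := L + a * L' * (‖A‖ * ‖A‖) with hh₀
    have hh₀0 : 0 ≤ h₀ := by
      have : 0 ≤ a := by linarith
      positivity
    obtain ⟨M, hM0, hM⟩ := key_step hfC hφ hθ' hc₁' hpmin hpmin' B h₀
    have hsucc : ∀ k, N ≤ k → M ≤ μ k → ¬ unsucc k := by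
      intro k hk hMk
      obtain ⟨h1, h2⟩ := hM (x k) (xhat k) (G k) (μ k) (pred k) (hB k hk) hMk (hGb k hk) (hrpos k)
        (hRk k) (hpredform k) (hpredμ k)
      rw [← hF, ← hF, ← hared] at h2
      rw [hunsucc]
      push Not
      have hnn : 0 ≤ pmin * (1 - θ) * ‖xhat k - x k‖ := by positivity
      have hpp : 0 < pred k := by
        have := mul_nonneg hnn (hrpos k).le
        linarith
      constructor
      · rw [hd]
        exact (mul_le_mul_of_nonneg_left (min_le_left _ _) hnn).trans_lt h1
      · rw [hρ, lt_div_iff₀ hpp]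
        exact h2
    -- lower bound for rbar
    set e := min ε (rbar N) with he
    have he0 : 0 < e := lt_min hε (hrbpos N)
    have hrb_ge : ∀ k, N ≤ k → e ≤ rbar k := by
      intro k hk
      induction k, hk using Nat.le_induction with
      | base => exact min_le_right _ _
      | succ k hk ih =>
        by_cases hu : ‖resid f φ (x (k + 1))‖ ≤ η * rbar k
        · rw [(hrbarupd k).1 hu]
          exact (min_le_left _ _).trans (hcon _ (by omega))
        · rw [(hrbarupd k).2 hu]; exact ih
    have hed : 0 < e ^ δ := Real.rpow_pos_of_pos he0 _
    have hνun : ∀ k, N ≤ k → unsucc k → ν k ≤ M / e ^ δ := by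
      intro k hk hu
      by_contra h
      push Not at h
      rw [div_lt_iff₀ hed] at h
      refine hsucc k hk ?_ hu
      rw [hμ]
      have := mul_le_mul_of_nonneg_left (Real.rpow_le_rpow he0.le (hrb_ge k hk) hδ0.le)
        (hνpos k).le
      linarith
    obtain ⟨V, hV⟩ : ∃ V, ∀ k, N ≤ k → ν k ≤ V := by
      refine ⟨max (ν N) (max νbar (σ₂ * (M / e ^ δ))), fun k hk => ?_⟩
      induction k, hk using Nat.le_induction with
      | base => exact le_max_left _ _
      | succ k hk ih =>
        by_cases hu : unsucc k
        · rw [((hupd k).1 hu).2]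
          exact (mul_le_mul_of_nonneg_left (hνun k hk hu) hσ₂0.le).trans
            ((le_max_right _ _).trans (le_max_right _ _))
        · refine le_trans ?_ ((le_max_left _ _).trans (le_max_right _ _))
          obtain ⟨-, h1, h2⟩ := (hupd k).2 hu
          rcases le_or_gt (ρ k) c₂ with h | h
          · rw [h1 h]; exact min_le_right _ _
          · rw [h2 h]; exact min_le_right _ _
    have hV0 : 0 ≤ V := (hνpos N).le.trans (hV N le_rfl)
    set Mu := V * rbar 0 ^ δ with hMu
    have hr0δ : 0 ≤ rbar 0 ^ δ := (Real.rpow_pos_of_pos (hrbpos 0) _).le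
    have hMu0 : 0 ≤ Mu := mul_nonneg hV0 hr0δ
    have hμle : ∀ k, N ≤ k → μ k ≤ Mu := by
      intro k hk
      rw [hμ]
      exact mul_le_mul (hV k hk) (Real.rpow_le_rpow (hrbpos k).le (hrb_le k) hδ0.le)
        (Real.rpow_nonneg (hrbpos k).le _) hV0
    -- step lengths bounded below
    set s := (1 - θ) * ε / (2 + h₀ + Mu) with hs
    have hden : 0 < 2 + h₀ + Mu := by linarith
    have hs0 : 0 < s := by positivity
    have hstep : ∀ k, N ≤ k → s ≤ ‖xhat k - x k‖ := by
      intro k hk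
      rw [hs, div_le_iff₀ hden]
      have h1 := resid_le hφ (x k) (xhat k) (G k) (hRk k)
      have h2 := hGb k hk
      have h3 := hμle k hk
      have h4 := mul_le_mul_of_nonneg_left (hcon k hk) hθ1.le
      have h5 : (2 + ‖G k‖) * ‖xhat k - x k‖ ≤ (2 + h₀ + Mu) * ‖xhat k - x k‖ :=
        mul_le_mul_of_nonneg_right (by linarith) (norm_nonneg _)
      linarith
    have hlim := tendsto_atTop_ciInf hmono ⟨m₀, hm₀⟩
    obtain ⟨N', hN'⟩ := Metric.tendsto_atTop.1 hlim (c * s) (by positivity)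
    have hallun : ∀ k, max N N' ≤ k → unsucc k := by
      intro k hk
      by_contra hu
      have hkN : N ≤ k := (le_max_left _ _).trans hk
      have h1 := hCc k (hcon k hkN)
      rw [((hupd k).2 hu).1] at h1
      have h2 := hN' k ((le_max_right _ _).trans hk)
      have h3 : (⨅ k, F (x k)) ≤ F (x (k + 1)) :=
        ciInf_le (f := fun k => F (x k)) ⟨m₀, hm₀⟩ (k + 1)
      rw [((hupd k).2 hu).1] at h3
      rw [Real.dist_eq] at h2
      have h4 := (abs_lt.1 h2).2
      have h5 := mul_le_mul_of_nonneg_left (hstep k hkN) hc.le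
      linarith
    have hgrow : ∀ j, ν (max N N' + j) = σ₂ ^ j * ν (max N N') := by
      intro j
      induction j with
      | zero => simp
      | succ j ih =>
        rw [← add_assoc, ((hupd _).1 (hallun _ (by omega))).2, ih]
        ring
    obtain ⟨j, hj⟩ := pow_unbounded_of_one_lt (V / ν (max N N')) hσ₂
    rw [div_lt_iff₀ (hνpos _)] at hj
    have h1 := hV (max N N' + j) (by omega)
    rw [hgrow] at h1
    linarith
  have huc : ∀ ε > 0, ∃ s > 0, ∀ k l, ‖x l - x k‖ < s →
      |‖resid f φ (x l)‖ - ‖resid f φ (x k)‖| < ε := by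
    intro ε hε
    obtain ⟨s, hs, hsX⟩ := Metric.uniformContinuousOn_iff.1 hUC (ε / 2) (by linarith)
    refine ⟨min s (ε / 4), lt_min hs (by linarith), fun k l hkl => ?_⟩
    have h1 := hsX (x l) (hX l) (x k) (hX k) (by
      rw [dist_eq_norm]; exact hkl.trans_le (min_le_left _ _))
    rw [dist_eq_norm] at h1
    have h2 := hkl.trans_le (min_le_right _ _)
    have h3 := resid_diff (f := f) hφ (x l) (x k)
    have h4 := abs_norm_sub_norm_le (resid f φ (x l)) (resid f φ (x k))
    linarith
  have hmainlim : Tendsto (fun k => ‖resid f φ (x k)‖) atTop (nhds 0) :=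
    lim_of_liminf x _ (fun k => F (x k)) (fun k => norm_nonneg _) hmono hbdd hC hinf huc
  refine ⟨hmainlim, fun xb hxb => ?_⟩
  have hgc : Continuous (gradient f) := (grad_contDiff hfC).continuous
  have hrc : Continuous (resid f φ) := by
    rw [continuous_iff_continuousAt]
    intro y
    unfold ContinuousAt
    rw [tendsto_iff_norm_sub_tendsto_zero]
    refine squeeze_zero (fun z => norm_nonneg _) (fun z => resid_diff (f := f) hφ z y) ?_
    have hc2 : Continuous fun z => 2 * ‖z - y‖ + ‖gradient f z - gradient f y‖ := by fun_prop
    simpa using hc2.tendsto y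
  have hzero : resid f φ xb = 0 := by
    obtain ⟨g, hg, hgt⟩ := MapClusterPt.tendsto_subseq hxb
    have h1 : Tendsto (fun k => ‖resid f φ (x (g k))‖) atTop (nhds ‖resid f φ xb‖) :=
      (hrc.norm.tendsto xb).comp hgt
    have h2 := hmainlim.comp hg.tendsto_atTop
    exact norm_eq_zero.1 (tendsto_nhds_unique h1 h2)
  have hfix : proxPt φ (xb - gradient f xb) = xb := by
    unfold resid at hzero
    exact (sub_eq_zero.1 hzero).symm
  have hsub := prox_subdiff hφ (xb - gradient f xb)
  rw [hfix] at hsub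
  exact ⟨_, hsub, by simp⟩
end
end
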